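/- arXiv:1911.02780 — 2 statements merged into one kernel-verified Lean document; each statement's English description precedes it below -/
import Mathlib

section
/- Let a_1, …, a_T and a'_1, …, a'_T be real sequences that agree at every index except possibly a fixed index t ∈ {1, …, T}, and let l be an integer with 1 ≤ l ≤ T. Then: (i) for every j ∈ {l, …, T} with j < t or j > t + 2l, one has MTS2l_{a'}[j] = MTS2l_a[j]; and (ii) the maximum of the density of a' over all windows [s,e] with e − s + 1 ≥ l equals the maximum over j ∈ {l, …, T} of M[j], where M[j] = MTS2l_{a'}[j] if t ≤ j ≤ t + 2l and M[j] = MTS2l_a[j] otherwise. Hence after a single entry of the sequence changes, only the values MTS2l[j] for j ∈ [t, t + 2l] need to be recomputed to obtain the new maximum l-segment density. -/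
/-!
A window ending at `j` only meets the index `t` if `t ≤ j`, and, when its length is at most `2l`,
only if `j ≤ t + 2l`; this gives (i). For (ii), (i) turns every reused value into `MTS2l a' l j`,
so it remains to see that windows of length between `l` and `2l` already realise the maximum
density over all windows of length at least `l`. This is `exists_short_window`: a window of length
more than `2l` splits into two windows of length at least `l`, its density is a weighted average
of theirs (`density_le_or_le`), so one of the two parts is at least as dense, and one inducts on
the length. All sets involved are finite, so the suprema are genuine maxima.
-/

/-- The density of the window [s,e] of the sequence `a`. -/
noncomputable def density (a : ℕ → ℝ) (s e : ℕ) : ℝ :=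
  (∑ i ∈ Finset.Icc s e, a i) / ((e : ℝ) - s + 1)

/-- `MTS2l a l j`: the maximum density over windows ending at `j` whose length
is between `l` and `2l`, i.e. over `[s,j]` with `max 1 (j−2l+1) ≤ s ≤ j−l+1`. -/
noncomputable def MTS2l (a : ℕ → ℝ) (l j : ℕ) : ℝ :=
  sSup {y : ℝ | ∃ s : ℕ, max 1 (j - 2 * l + 1) ≤ s ∧ s ≤ j - l + 1 ∧
    y = density a s j}

/-- The density of a window is at most that of one of the two parts into which it is cut after
the index `m`. -/
lemma density_le_or_le (a : ℕ → ℝ) {s m e : ℕ} (hsm : s ≤ m) (hme : m < e) :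
    density a s e ≤ density a s m ∨ density a s e ≤ density a (m + 1) e := by
  by_contra! h
  obtain ⟨h1, h2⟩ := h
  have hs : (s : ℝ) ≤ m := by exact_mod_cast hsm
  have hm : (m : ℝ) + 1 ≤ e := by exact_mod_cast hme
  have hsum : ∑ i ∈ Finset.Icc s e, a i
      = ∑ i ∈ Finset.Icc s m, a i + ∑ i ∈ Finset.Icc (m + 1) e, a i := by
    rw [← Finset.sum_union]
    · congr 1
      ext i
      simp only [Finset.mem_union, Finset.mem_Icc]
      omega
    · rw [Finset.disjoint_left]
      intro i
      simp only [Finset.mem_Icc]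
      omega
  have h0 : density a s e * ((e : ℝ) - s + 1) = ∑ i ∈ Finset.Icc s e, a i := by
    unfold density
    exact div_mul_cancel₀ _ (by linarith)
  generalize density a s e = D at *
  unfold density at h1 h2
  rw [div_lt_iff₀ (by linarith)] at h1
  rw [div_lt_iff₀ (by push_cast; linarith)] at h2
  push_cast at h2
  linarith

/-- Every window of length at least `l` is dominated by a window inside it whose length is
between `l` and `2l`. -/
lemma exists_short_window (a : ℕ → ℝ) {l : ℕ} (hl : 1 ≤ l) (e : ℕ) :
    ∀ n s : ℕ, e - s = n → 1 ≤ s → s ≤ e → l ≤ e - s + 1 →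
      ∃ s' j : ℕ, l ≤ j ∧ j ≤ e ∧ max 1 (j - 2 * l + 1) ≤ s' ∧ s' ≤ j - l + 1 ∧
        density a s e ≤ density a s' j := by
  intro n
  induction n using Nat.strong_induction_on with
  | _ n ih =>
    intro s hn hs hse hlen
    by_cases hshort : e - s + 1 ≤ 2 * l
    · exact ⟨s, e, by omega, le_rfl, by omega, by omega, le_rfl⟩
    · rcases density_le_or_le a (s := s) (m := s + l - 1) (e := e) (by omega) (by omega) with h | h
      · exact ⟨s, s + l - 1, by omega, by omega, by omega, by omega, h⟩
      · obtain ⟨s', j, h1, h2, h3, h4, h5⟩ :=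
          ih (e - (s + l - 1 + 1)) (by omega) (s + l - 1 + 1) rfl (by omega) (by omega) (by omega)
        exact ⟨s', j, h1, h2, h3, h4, h.trans h5⟩

lemma MTS2l_bddAbove (a : ℕ → ℝ) (l j : ℕ) :
    BddAbove {y : ℝ | ∃ s : ℕ, max 1 (j - 2 * l + 1) ≤ s ∧ s ≤ j - l + 1 ∧
      y = density a s j} := by
  refine (((Finset.Icc 0 (j - l + 1)).finite_toSet.image fun s => density a s j).subset
    ?_).bddAbove
  rintro y ⟨s, -, h, rfl⟩
  exact ⟨s, by simpa using h, rfl⟩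

lemma windows_bddAbove (a : ℕ → ℝ) (l T : ℕ) :
    BddAbove {x : ℝ | ∃ s e : ℕ, 1 ≤ s ∧ s ≤ e ∧ e ≤ T ∧ l ≤ e - s + 1 ∧
      x = density a s e} := by
  refine (((Finset.Icc 0 T ×ˢ Finset.Icc 0 T).finite_toSet.image
    fun p => density a p.1 p.2).subset ?_).bddAbove
  rintro y ⟨s, e, -, hse, heT, -, rfl⟩
  refine ⟨(s, e), ?_, rfl⟩
  simp only [Finset.coe_product, Set.mem_prod, Finset.mem_coe, Finset.mem_Icc]
  omega

/-- if `a` and `a'` agree everywhere except possibly at index `t`,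
then (i) `MTS2l` is unchanged at every `j` with `j < t` or `j > t + 2l`, and
(ii) the new maximum `l`-segment density is obtained by recomputing `MTS2l[j]`
only for `j ∈ [t, t + 2l]` and reusing the old values elsewhere. -/
theorem update_MTS2l_local (T : ℕ) (a a' : ℕ → ℝ) (t : ℕ)
    (ht1 : 1 ≤ t) (htT : t ≤ T)
    (hagree : ∀ i, i ≠ t → a i = a' i)
    (l : ℕ) (hl : 1 ≤ l) (hlT : l ≤ T) :
    (∀ j : ℕ, l ≤ j → j ≤ T → (j < t ∨ t + 2 * l < j) →
      MTS2l a' l j = MTS2l a l j)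
    ∧ sSup {x : ℝ | ∃ s e : ℕ, 1 ≤ s ∧ s ≤ e ∧ e ≤ T ∧ l ≤ e - s + 1 ∧
          x = density a' s e}
      = sSup {x : ℝ | ∃ j : ℕ, l ≤ j ∧ j ≤ T ∧
          x = if t ≤ j ∧ j ≤ t + 2 * l then MTS2l a' l j else MTS2l a l j} := by
  have hi : ∀ j : ℕ, l ≤ j → j ≤ T → (j < t ∨ t + 2 * l < j) →
      MTS2l a' l j = MTS2l a l j := by
    intro j _ _ hjt
    have hd : ∀ s, max 1 (j - 2 * l + 1) ≤ s → density a' s j = density a s j := by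
      intro s hs
      unfold density
      congr 1
      refine Finset.sum_congr rfl fun i hi => (hagree i ?_).symm
      rw [Finset.mem_Icc] at hi
      omega
    unfold MTS2l
    congr 1
    ext y
    constructor
    · rintro ⟨s, h1, h2, rfl⟩
      exact ⟨s, h1, h2, hd s h1⟩
    · rintro ⟨s, h1, h2, rfl⟩
      exact ⟨s, h1, h2, (hd s h1).symm⟩
  refine ⟨hi, ?_⟩
  have hM : ∀ j, l ≤ j → j ≤ T →
      (if t ≤ j ∧ j ≤ t + 2 * l then MTS2l a' l j else MTS2l a l j) = MTS2l a' l j := by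
    intro j h1 h2
    split_ifs with h
    · rfl
    · exact (hi j h1 h2 (by omega)).symm
  apply le_antisymm
  · refine csSup_le ⟨_, 1, T, le_rfl, by omega, le_rfl, by omega, rfl⟩ ?_
    rintro x ⟨s, e, hs, hse, heT, hlen, rfl⟩
    obtain ⟨s', j, h1, h2, h3, h4, h5⟩ := exists_short_window a' hl e _ s rfl hs hse hlen
    refine h5.trans ((le_csSup (MTS2l_bddAbove a' l j) ⟨s', h3, h4, rfl⟩).trans ?_)
    refine le_csSup ?_ ⟨j, h1, h2.trans heT, (hM j h1 (h2.trans heT)).symm⟩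
    refine (((Finset.Icc l T).finite_toSet.image fun j => MTS2l a' l j).subset ?_).bddAbove
    rintro y ⟨j, h1, h2, rfl⟩
    exact ⟨j, by simpa using ⟨h1, h2⟩, (hM j h1 h2).symm⟩
  · refine csSup_le ⟨_, l, le_rfl, hlT, rfl⟩ ?_
    rintro x ⟨j, h1, h2, rfl⟩
    rw [hM j h1 h2]
    refine csSup_le ⟨_, j - l + 1, by omega, le_rfl, rfl⟩ ?_
    rintro y ⟨s, h3, h4, rfl⟩
    exact le_csSup (windows_bddAbove a' l T)
      ⟨s, j, by omega, by omega, h2, by omega, rfl⟩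
end

section
/- (Pruning lemma for Pareto-optimal cores.) Let G_1, …, G_T be a temporal graph on a finite vertex set V. Suppose l' and l* are integers with 2 ≤ l' < l* ≤ T, δ' > 0 is a real with MDC(l',δ') ≠ ∅, and (l*, δ*) is a Pareto-optimal pair. Then δ* ≥ δ'·l'/l*, and consequently every vertex u of MDC(l*, δ*) has de-temporal degree within MDC(l*, δ*) at least δ'·l'/l*; hence MDC(l*, δ*) is contained in a subgraph of the de-temporal graph in which every vertex has degree at least δ'·l'/l*. -/
/-!
Put `δ'' = δ' · l' / l*`. A window of length `L ≥ l'` witnessing that `u` is `(l',δ')`-dense in `C'`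
also witnesses `(l*,δ'')`-density when `L ≥ l*`, since `δ'' ≤ δ'`. When `L < l*`, extend it inside
`[1,T]` to length exactly `l*`: the total degree does not decrease, so it is still at least
`δ' · L ≥ δ' · l' = δ'' · l*` (`denseNode.extend`). Hence `C'` is `(l*,δ'')`-dense, the core
`MDC(l*,δ'')`, which exists by `exists_isMDC`, is nonempty, and `δ* < δ''` would contradict the
Pareto-optimality of `(l*,δ*)`.

The degree bound follows because every snapshot degree of `u` within a set is at most its
de-temporal degree, and hence so is the average over a window, which is at least `δ*`.
-/

variable {V : Type*}

-- `tdeg G S u t`: the number of vertices `v ∈ S` adjacent to `u` in the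
-- snapshot `G t`.
open Classical in
noncomputable def tdeg (G : ℕ → SimpleGraph V) (S : Finset V) (u : V) (t : ℕ) : ℕ :=
  (S.filter fun v => (G t).Adj u v).card

/-- `u` is an `(l,δ)`-dense node in `S`: there is a window `[s,e] ⊆ [1,T]` of
length at least `l` on which the total degree of `u` towards `S` is at least
`δ · (e − s + 1)`. -/
def denseNode (T : ℕ) (G : ℕ → SimpleGraph V) (l : ℕ) (δ : ℝ)
    (S : Finset V) (u : V) : Prop :=
  ∃ s e : ℕ, 1 ≤ s ∧ s ≤ e ∧ e ≤ T ∧ l ≤ e - s + 1 ∧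
    δ * ((e : ℝ) - s + 1) ≤ ∑ t ∈ Finset.Icc s e, (tdeg G S u t : ℝ)

/-- `C` is `(l,δ)`-dense: every vertex of `C` is an `(l,δ)`-dense node in `C`. -/
def denseSet (T : ℕ) (G : ℕ → SimpleGraph V) (l : ℕ) (δ : ℝ) (C : Finset V) : Prop :=
  ∀ u ∈ C, denseNode T G l δ C u

-- `dtDeg T G C u`: the de-temporal degree of `u` within `C`, i.e. the number
-- of `v ∈ C` adjacent to `u` in some snapshot `G t`, `t ∈ {1,…,T}`.
open Classical in
noncomputable def dtDeg (T : ℕ) (G : ℕ → SimpleGraph V) (C : Finset V) (u : V) : ℕ :=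
  (C.filter fun v => ∃ t : ℕ, 1 ≤ t ∧ t ≤ T ∧ (G t).Adj u v).card

/-- `C` is the `(l,δ)`-maximal dense core: it is `(l,δ)`-dense and contains
every `(l,δ)`-dense subset of `V`. -/
def IsMDC (T : ℕ) (G : ℕ → SimpleGraph V) (l : ℕ) (δ : ℝ) (C : Finset V) : Prop :=
  denseSet T G l δ C ∧ ∀ S : Finset V, denseSet T G l δ S → S ⊆ C

/-- `(l,δ)` is a Pareto-optimal pair: `2 ≤ l ≤ T`, `δ > 0`, the
`(l,δ)`-maximal dense core is nonempty, and no pair `(l',δ')` with nonempty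
maximal dense core dominates it. -/
def Pareto (T : ℕ) (G : ℕ → SimpleGraph V) (l : ℕ) (δ : ℝ) : Prop :=
  2 ≤ l ∧ l ≤ T ∧ 0 < δ ∧
  (∃ C : Finset V, IsMDC T G l δ C ∧ C.Nonempty) ∧
  ∀ (l' : ℕ) (δ' : ℝ) (C' : Finset V), 2 ≤ l' → l' ≤ T → 0 < δ' →
    IsMDC T G l' δ' C' → C'.Nonempty →
    ¬ ((l < l' ∧ δ ≤ δ') ∨ (l ≤ l' ∧ δ < δ'))

theorem tdeg_mono (G : ℕ → SimpleGraph V) {S S' : Finset V} (h : S ⊆ S') (u : V) (t : ℕ) :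
    tdeg G S u t ≤ tdeg G S' u t := by
  classical
  unfold tdeg
  exact Finset.card_le_card (Finset.filter_subset_filter _ h)

theorem tdeg_le_dtDeg {T : ℕ} (G : ℕ → SimpleGraph V) (S : Finset V) (u : V) {t : ℕ}
    (h1 : 1 ≤ t) (h2 : t ≤ T) : tdeg G S u t ≤ dtDeg T G S u := by
  classical
  unfold tdeg dtDeg
  exact Finset.card_le_card
    (Finset.monotone_filter_right S fun v _ hv => ⟨t, h1, h2, hv⟩)

theorem denseNode.mono {T : ℕ} {G : ℕ → SimpleGraph V} {l : ℕ} {δ : ℝ} {S S' : Finset V} {u : V}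
    (h : denseNode T G l δ S u) (hS : S ⊆ S') : denseNode T G l δ S' u := by
  obtain ⟨s, e, h1, h2, h3, h4, h5⟩ := h
  refine ⟨s, e, h1, h2, h3, h4, h5.trans (Finset.sum_le_sum fun t _ => ?_)⟩
  exact_mod_cast tdeg_mono G hS u t

/-- The maximal dense core exists: it is the union of all dense sets, which is dense because
density of a node is monotone in the ambient set. -/
theorem exists_isMDC [Fintype V] (T : ℕ) (G : ℕ → SimpleGraph V) (l : ℕ) (δ : ℝ) :
    ∃ C : Finset V, IsMDC T G l δ C := by
  classical
  have hsub : ∀ S : Finset V, denseSet T G l δ S →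
      S ⊆ Finset.univ.filter fun u => ∃ S : Finset V, denseSet T G l δ S ∧ u ∈ S :=
    fun S hS u hu => Finset.mem_filter.2 ⟨Finset.mem_univ u, S, hS, hu⟩
  refine ⟨_, fun u hu => ?_, hsub⟩
  obtain ⟨S, hS, huS⟩ := (Finset.mem_filter.1 hu).2
  exact (hS u huS).mono (hsub S hS)

/-- Lengthening the minimal window from `l` to `m` costs at most a factor `l / m` in density. -/
theorem denseNode.extend {T : ℕ} {G : ℕ → SimpleGraph V} {l m : ℕ} {δ : ℝ} {S : Finset V} {u : V}
    (h : denseNode T G l δ S u) (hδ : 0 < δ) (hm : 0 < m) (hlm : l ≤ m) (hmT : m ≤ T) :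
    denseNode T G m (δ * l / m) S u := by
  obtain ⟨s, e, h1, h2, h3, h4, h5⟩ := h
  have hm' : (0 : ℝ) < m := by exact_mod_cast hm
  have hlm' : (l : ℝ) ≤ m := by exact_mod_cast hlm
  have hse : (s : ℝ) ≤ e := by exact_mod_cast h2
  by_cases hL : m ≤ e - s + 1
  · refine ⟨s, e, h1, h2, h3, hL, le_trans ?_ h5⟩
    have hle : δ * l / m ≤ δ := by
      rw [div_le_iff₀ hm']
      gcongr
    exact mul_le_mul_of_nonneg_right hle (by linarith)
  · -- The extended window starts at `s`, or earlier if `[s, s + m - 1]` would overshoot `T`.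
    obtain ⟨a, ha1, has, hea, haT⟩ : ∃ a, 1 ≤ a ∧ a ≤ s ∧ e ≤ a + m - 1 ∧ a + m - 1 ≤ T :=
      ⟨min s (T - m + 1), by omega, by omega, by omega, by omega⟩
    refine ⟨a, a + m - 1, ha1, by omega, haT, by omega, ?_⟩
    have hlen : ((a + m - 1 : ℕ) : ℝ) - a + 1 = m := by
      rw [Nat.cast_sub (by omega)]
      push_cast
      ring
    have hl : (l : ℝ) ≤ (e : ℝ) - s + 1 := by
      have : l + s ≤ e + 1 := by omega
      have : (l : ℝ) + s ≤ e + 1 := by exact_mod_cast this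
      linarith
    rw [hlen, div_mul_cancel₀ _ hm'.ne']
    calc δ * l ≤ δ * ((e : ℝ) - s + 1) := by gcongr
      _ ≤ ∑ t ∈ Finset.Icc s e, (tdeg G S u t : ℝ) := h5
      _ ≤ ∑ t ∈ Finset.Icc a (a + m - 1), (tdeg G S u t : ℝ) :=
        Finset.sum_le_sum_of_subset_of_nonneg (Finset.Icc_subset_Icc has hea)
          fun _ _ _ => Nat.cast_nonneg _

theorem denseNode.le_dtDeg {T : ℕ} {G : ℕ → SimpleGraph V} {l : ℕ} {δ : ℝ} {S : Finset V} {u : V}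
    (h : denseNode T G l δ S u) : δ ≤ dtDeg T G S u := by
  obtain ⟨s, e, h1, h2, h3, -, h5⟩ := h
  have hse : (s : ℝ) ≤ e := by exact_mod_cast h2
  have hsum : ∑ t ∈ Finset.Icc s e, (tdeg G S u t : ℝ) ≤
      ∑ t ∈ Finset.Icc s e, (dtDeg T G S u : ℝ) := by
    refine Finset.sum_le_sum fun t ht => ?_
    rw [Finset.mem_Icc] at ht
    exact_mod_cast tdeg_le_dtDeg G S u (h1.trans ht.1) (ht.2.trans h3)
  have hcard : ((e + 1 - s : ℕ) : ℝ) = (e : ℝ) - s + 1 := by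
    rw [Nat.cast_sub (by omega)]
    push_cast
    ring
  rw [Finset.sum_const, Nat.card_Icc, nsmul_eq_mul, hcard, mul_comm] at hsum
  exact le_of_mul_le_mul_right (h5.trans hsum) (by linarith)

/-- pruning lemma for Pareto-optimal cores: if
`2 ≤ l' < l* ≤ T`, `MDC(l',δ')` is nonempty and `(l*,δ*)` is Pareto-optimal,
then `δ* ≥ δ'·l'/l*`, and every vertex of `MDC(l*,δ*)` has de-temporal degree
within it at least `δ'·l'/l*`. -/
theorem pareto_pruning {V : Type*} [Fintype V] [DecidableEq V]
    (T : ℕ) (hT : 1 ≤ T) (G : ℕ → SimpleGraph V)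
    (l' lstar : ℕ) (hl' : 2 ≤ l') (hlt : l' < lstar) (hlsT : lstar ≤ T)
    (δ' δstar : ℝ) (hδ' : 0 < δ')
    (C' : Finset V) (hC' : IsMDC T G l' δ' C') (hne : C'.Nonempty)
    (hp : Pareto T G lstar δstar)
    (Cstar : Finset V) (hCstar : IsMDC T G lstar δstar Cstar) :
    δ' * l' / lstar ≤ δstar ∧
      ∀ u ∈ Cstar, δ' * l' / lstar ≤ (dtDeg T G Cstar u : ℝ) := by
  have hlpos : (0 : ℝ) < l' := by exact_mod_cast (by omega : 0 < l')
  have hmpos : (0 : ℝ) < lstar := by exact_mod_cast (by omega : 0 < lstar)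
  have key : δ' * l' / lstar ≤ δstar := by
    obtain ⟨-, -, -, -, hdom⟩ := hp
    obtain ⟨C, hC⟩ := exists_isMDC T G lstar (δ' * l' / lstar)
    have hsub : C' ⊆ C := hC.2 C' fun u hu =>
      (hC'.1 u hu).extend hδ' (by omega) hlt.le hlsT
    by_contra! hlt'
    exact hdom lstar _ C (by omega) hlsT (by positivity) hC (hne.mono hsub)
      (Or.inr ⟨le_rfl, hlt'⟩)
  exact ⟨key, fun u hu => key.trans (hCstar.1 u hu).le_dtDeg⟩
end
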